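/- Assume n ≥ 3. For any X ∈ M_{1,0}, the stabilizer {A ∈ G : A X = X} of X in G is isomorphic as a group to the semidirect product of the additive group ℝ^{n−1} by L = {B ∈ GL(n−1,ℝ) : η'(Bu,Bv) = η'(u,v) for all u,v ∈ ℝ^{n−1}, det B = 1}, where η' is the standard Minkowski bilinear form of signature (1,n−2) on ℝ^{n−1} and L acts on ℝ^{n−1} by the standard linear action. (This realizes the flat-model orbit Spi^n = M_{1,0} as the homogeneous space ISO(1,n−1)/(ℝ^{n−1} ⋊ SO(1,n−2)).) -/

import Mathlib

def formSig (k m : ℕ) (x y : Fin m → ℝ) : ℝ :=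
  ∑ i : Fin m, (if (i : ℕ) < k then -(x i * y i) else x i * y i)

/-- The group of linear automorphisms of `ℝ^m` with determinant `1` preserving the
bilinear form `formSig k m` (of signature `(k, m-k)`), realized as a subgroup of the
group of invertible `m × m` real matrices. -/
def specialIsometry (k m : ℕ) : Subgroup (Matrix (Fin m) (Fin m) ℝ)ˣ where
  carrier := {A | ((A : Matrix (Fin m) (Fin m) ℝ)).det = 1 ∧
    ∀ x y : Fin m → ℝ,
      formSig k m ((A : Matrix (Fin m) (Fin m) ℝ).mulVec x)
        ((A : Matrix (Fin m) (Fin m) ℝ).mulVec y) = formSig k m x y}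
  one_mem' := by
    refine ⟨by simp, fun x y => by simp⟩
  mul_mem' := by
    intro a b ha hb
    obtain ⟨had, haf⟩ := ha
    obtain ⟨hbd, hbf⟩ := hb
    refine ⟨by rw [Units.val_mul, Matrix.det_mul, had, hbd, mul_one], fun x y => ?_⟩
    rw [Units.val_mul, ← Matrix.mulVec_mulVec, ← Matrix.mulVec_mulVec, haf, hbf]
  inv_mem' := by
    intro a ha
    obtain ⟨had, haf⟩ := ha
    have hinv : (↑a⁻¹ : Matrix (Fin m) (Fin m) ℝ) * (↑a : Matrix (Fin m) (Fin m) ℝ) = 1 := a.inv_mul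
    refine ⟨?_, fun x y => ?_⟩
    · have h := congrArg Matrix.det hinv
      rw [Matrix.det_mul, had, mul_one, Matrix.det_one] at h
      exact h
    · have hx : ∀ v : Fin m → ℝ,
          (↑a : Matrix (Fin m) (Fin m) ℝ).mulVec
            ((↑a⁻¹ : Matrix (Fin m) (Fin m) ℝ).mulVec v) = v := by
        intro v
        rw [Matrix.mulVec_mulVec, a.mul_inv, Matrix.one_mulVec]
      calc formSig k m ((↑a⁻¹ : Matrix (Fin m) (Fin m) ℝ).mulVec x)
              ((↑a⁻¹ : Matrix (Fin m) (Fin m) ℝ).mulVec y)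
          = formSig k m
              ((↑a : Matrix (Fin m) (Fin m) ℝ).mulVec
                ((↑a⁻¹ : Matrix (Fin m) (Fin m) ℝ).mulVec x))
              ((↑a : Matrix (Fin m) (Fin m) ℝ).mulVec
                ((↑a⁻¹ : Matrix (Fin m) (Fin m) ℝ).mulVec y)) := (haf _ _).symm
        _ = formSig k m x y := by rw [hx, hx]

/-- The subgroup of invertible `m × m` real matrices fixing a given vector `v`. -/
def vecStab (m : ℕ) (v : Fin m → ℝ) : Subgroup (Matrix (Fin m) (Fin m) ℝ)ˣ where
  carrier := {A | (A : Matrix (Fin m) (Fin m) ℝ).mulVec v = v}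
  one_mem' := by simp
  mul_mem' := by
    intro a b ha hb
    show ((a * b : (Matrix (Fin m) (Fin m) ℝ)ˣ) : Matrix (Fin m) (Fin m) ℝ).mulVec v = v
    rw [Units.val_mul, ← Matrix.mulVec_mulVec, hb, ha]
  inv_mem' := by
    intro a ha
    show ((a⁻¹ : (Matrix (Fin m) (Fin m) ℝ)ˣ) : Matrix (Fin m) (Fin m) ℝ).mulVec v = v
    conv_lhs => rw [← ha]
    rw [Matrix.mulVec_mulVec, a.inv_mul, Matrix.one_mulVec]

/-- The 'Poincaré subgroup' of `SL(n+2,ℝ)` determined by the signature `(2,n)` form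
`formSig 2 (n+2)` and the null vector `I`. -/
def poincareGroup (n : ℕ) (I : Fin (n + 2) → ℝ) :
    Subgroup (Matrix (Fin (n + 2)) (Fin (n + 2)) ℝ)ˣ :=
  specialIsometry 2 (n + 2) ⊓ vecStab (n + 2) I

/-- The multiplicative automorphism of `Multiplicative ℝ^m` induced by an invertible
matrix acting by matrix–vector multiplication. -/
def mulVecMulAut {m : ℕ} (A : (Matrix (Fin m) (Fin m) ℝ)ˣ) :
    Multiplicative (Fin m → ℝ) ≃* Multiplicative (Fin m → ℝ) where
  toFun v := Multiplicative.ofAdd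
    ((A : Matrix (Fin m) (Fin m) ℝ).mulVec (Multiplicative.toAdd v))
  invFun v := Multiplicative.ofAdd
    ((↑A⁻¹ : Matrix (Fin m) (Fin m) ℝ).mulVec (Multiplicative.toAdd v))
  left_inv v := by
    simp only [toAdd_ofAdd, Matrix.mulVec_mulVec, Units.inv_mul, Matrix.one_mulVec,
      ofAdd_toAdd]
  right_inv v := by
    simp only [toAdd_ofAdd, Matrix.mulVec_mulVec, Units.mul_inv, Matrix.one_mulVec,
      ofAdd_toAdd]
  map_mul' u v := by
    simp only [toAdd_mul, Matrix.mulVec_add, ofAdd_add]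

/-- A subgroup of invertible `m × m` real matrices acts on the (additive, written
multiplicatively) translation group `ℝ^m` by matrix–vector multiplication. -/
def subgroupMulVecHom {m : ℕ} (S : Subgroup (Matrix (Fin m) (Fin m) ℝ)ˣ) :
    S →* MulAut (Multiplicative (Fin m → ℝ)) where
  toFun A := mulVecMulAut (A : (Matrix (Fin m) (Fin m) ℝ)ˣ)
  map_one' := by
    ext v
    simp [mulVecMulAut]
  map_mul' a b := by
    ext v
    simp [mulVecMulAut, MulAut.mul_apply, Matrix.mulVec_mulVec]

/-- The set `M_{λ,s} = {X : Φ(X,X) = λ, Φ(I,X) = s, X ∉ ℝ·I}`. -/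
def Mset (n : ℕ) (I : Fin (n + 2) → ℝ) (lam s : ℝ) : Set (Fin (n + 2) → ℝ) :=
  {X | formSig 2 (n + 2) X X = lam ∧ formSig 2 (n + 2) I X = s ∧ ¬ ∃ c : ℝ, X = c • I}

/-! Complete `I` to a hyperbolic pair `I, J` orthogonal to `X`. By Sylvester's law of inertia, the
complement `V` of `I, J, X` carries the form of signature `(k, m - k)` when the whole space has
signature `(k + 1, m + 2 - k)` and `X` has positive norm. An isometry fixing `I` and `X` fixes `V`
only modulo `I`: it is determined by the isometry `f` that it induces on `V` and by the component
`w` in `V` of the image of `J`, and conversely every pair `(w, f)` occurs. These maps compose by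
`(w, f) (w', f') = (w + f w', f f')` and have determinant `det f`. -/

open LinearMap (BilinForm)

section Signature

open QuadraticMap QuadraticForm

/-- The isometry of weighted sums of squares given by a bijection of the index types that
matches the weights. -/
def weightedSumSquaresReindex {ι κ : Type*} [Fintype ι] [Fintype κ] {w : ι → ℝ} {w' : κ → ℝ}
    (e : ι ≃ κ) (h : ∀ i, w' (e i) = w i) :
    (weightedSumSquares ℝ w).IsometryEquiv (weightedSumSquares ℝ w') where
  toLinearEquiv := LinearEquiv.funCongrLeft ℝ ℝ e.symm
  map_app' x := by
    simp [weightedSumSquares_apply, ← e.sum_comp, LinearEquiv.funCongrLeft_apply, h]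

lemma exists_equiv_comp_eq_of_ncard_neg_eq {ι κ : Type*} [Finite ι] [Finite κ]
    {w : ι → SignType} {w' : κ → SignType} (hw : ∀ i, w i ≠ 0) (hw' : ∀ j, w' j ≠ 0)
    (hcard : Nat.card ι = Nat.card κ)
    (hneg : {i | w i < 0}.ncard = {j | w' j < 0}.ncard) :
    ∃ e : ι ≃ κ, ∀ i, w' (e i) = w i := by
  have eq_neg_one (s : SignType) : s = -1 ↔ s < 0 := by decide +revert
  have eq_one {s : SignType} (hs : s ≠ 0) : s = 1 ↔ ¬ s < 0 := by decide +revert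
  have hfiber (s : SignType) : Nat.card {i // w i = s} = Nat.card {j // w' j = s} := by
    cases s with
    | zero => simp [SignType.zero_eq_zero, hw, hw']
    | neg =>
      simp only [SignType.neg_eq_neg_one, eq_neg_one]
      exact hneg
    | pos =>
      simp only [SignType.pos_eq_one, eq_one, hw, hw', ne_eq, not_false_eq_true]
      change {i | w i < 0}ᶜ.ncard = {j | w' j < 0}ᶜ.ncard
      rw [Set.ncard_compl, Set.ncard_compl, hcard, hneg]
  exact ⟨.ofFiberEquiv fun s ↦ Classical.choice (Finite.card_eq.1 (hfiber s)),
    fun i ↦ Equiv.ofFiberEquiv_map _ i⟩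

theorem equivalent_of_finrank_eq_of_sigNeg_eq {V V' : Type*} [AddCommGroup V] [Module ℝ V]
    [FiniteDimensional ℝ V] [AddCommGroup V'] [Module ℝ V'] [FiniteDimensional ℝ V']
    {Q : QuadraticForm ℝ V} {Q' : QuadraticForm ℝ V'}
    (hQ : (associated (R := ℝ) Q).SeparatingLeft) (hQ' : (associated (R := ℝ) Q').SeparatingLeft)
    (hrank : Module.finrank ℝ V = Module.finrank ℝ V') (hneg : sigNeg Q = sigNeg Q') :
    Q.Equivalent Q' := by
  obtain ⟨w, hw, hQw⟩ := equivalent_sign_ne_zero_weighted_sum_squared Q hQ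
  obtain ⟨w', hw', hQw'⟩ := equivalent_sign_ne_zero_weighted_sum_squared Q' hQ'
  rw [sigNeg_of_equiv_weightedSumSquares hQw, sigNeg_of_equiv_weightedSumSquares hQw'] at hneg
  have cast_neg (s : SignType) : (s : ℝ) < 0 ↔ s < 0 := by cases s <;> simp
  obtain ⟨e, he⟩ := exists_equiv_comp_eq_of_ncard_neg_eq hw hw' (by simpa using hrank)
    (by simpa only [cast_neg] using hneg)
  exact hQw.trans <| .trans ⟨weightedSumSquaresReindex e fun i ↦ by rw [he]⟩ hQw'.symm

theorem sigNeg_prod {V V' : Type*} [AddCommGroup V] [Module ℝ V] [FiniteDimensional ℝ V]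
    [AddCommGroup V'] [Module ℝ V'] [FiniteDimensional ℝ V'] (Q : QuadraticForm ℝ V)
    (Q' : QuadraticForm ℝ V') : sigNeg (Q.prod Q') = sigNeg Q + sigNeg Q' := by
  obtain ⟨w, hw⟩ := equivalent_weightedSumSquares Q
  obtain ⟨w', hw'⟩ := equivalent_weightedSumSquares Q'
  have hsum : (Q.prod Q').Equivalent (weightedSumSquares ℝ (Sum.elim w w')) :=
    (hw.prod hw').trans ⟨{
      (LinearEquiv.sumArrowLequivProdArrow _ _ ℝ ℝ).symm with
      map_app' := fun ⟨x, y⟩ ↦ by simp [weightedSumSquares_apply] }⟩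
  rw [sigNeg_of_equiv_weightedSumSquares hw, sigNeg_of_equiv_weightedSumSquares hw',
    sigNeg_of_equiv_weightedSumSquares hsum]
  have hneg : {i | Sum.elim w w' i < 0} = Sum.inl '' {i | w i < 0} ∪ Sum.inr '' {j | w' j < 0} := by
    ext (i | j) <;> simp
  rw [hneg, Set.ncard_union_eq (by simp [Set.disjoint_left]),
    Set.ncard_image_of_injective _ Sum.inl_injective,
    Set.ncard_image_of_injective _ Sum.inr_injective]

end Signature

section formSig

open QuadraticMap QuadraticForm

/-- The form `formSig k m` as a bundled bilinear form. -/
def formSigBilin (k m : ℕ) : BilinForm ℝ (Fin m → ℝ) :=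
  Matrix.toBilin' (.diagonal fun i ↦ if (i : ℕ) < k then -1 else 1)

variable (k m : ℕ)

lemma formSigBilin_apply (x y : Fin m → ℝ) : formSigBilin k m x y = formSig k m x y := by
  simp [formSigBilin, formSig, Matrix.toBilin'_apply', dotProduct, Matrix.mulVec_diagonal]

lemma formSigBilin_isSymm : (formSigBilin k m).IsSymm where
  eq x y := by simp [formSigBilin_apply, formSig, mul_comm]

lemma formSigBilin_separatingLeft : (formSigBilin k m).SeparatingLeft := by
  rw [formSigBilin, Matrix.separatingLeft_toBilin'_iff, Matrix.separatingLeft_iff_det_ne_zero,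
    Matrix.det_diagonal, Finset.prod_ne_zero_iff]
  intro i _
  split_ifs <;> norm_num

lemma sigNeg_formSigBilin : sigNeg (formSigBilin k m).toQuadraticMap = min m k := by
  have hsq : (formSigBilin k m).toQuadraticMap =
      weightedSumSquares ℝ fun i : Fin m ↦ if (i : ℕ) < k then (-1 : ℝ) else 1 := by
    ext x
    simp [formSigBilin_apply, formSig, weightedSumSquares_apply, ite_mul]
  have hneg : {i : Fin m | (if (i : ℕ) < k then (-1 : ℝ) else 1) < 0} =
      ({i : Fin m | (i : ℕ) < k} : Finset (Fin m)) := by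
    ext i
    by_cases hi : (i : ℕ) < k <;> simp [hi]
  rw [hsq, sigNeg_weightedSumSquares, hneg, Set.ncard_coe_finset, Fin.card_filter_val_lt]

end formSig

section HyperbolicSum

variable {K V : Type*} [Field K] [AddCommGroup V] [Module K V]

/-- The orthogonal sum of a bilinear form `β`, a hyperbolic plane and the form `⟨c⟩`. A vector
`(u, a, b, t)` has component `u` in the space of `β`, coordinates `a, b` along the two null vectors
of the hyperbolic plane, and coordinate `t` along the vector of norm `c`. -/
def hyperbolicSum (β : BilinForm K V) (c : K) : BilinForm K (V × K × K × K) :=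
  .mk₂ K (fun x y ↦ β x.1 y.1 + (x.2.1 * y.2.2.1 + x.2.2.1 * y.2.1) + c * x.2.2.2 * y.2.2.2)
    (fun x y z ↦ by simp only [Prod.fst_add, Prod.snd_add, map_add, LinearMap.add_apply]; ring)
    (fun r x y ↦ by
      simp only [Prod.smul_fst, Prod.smul_snd, map_smul, LinearMap.smul_apply, smul_eq_mul]; ring)
    (fun x y z ↦ by simp only [Prod.fst_add, Prod.snd_add, map_add]; ring)
    (fun r x y ↦ by simp only [Prod.smul_fst, Prod.smul_snd, map_smul, smul_eq_mul]; ring)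

@[simp]
lemma hyperbolicSum_apply (β : BilinForm K V) (c : K) (x y : V × K × K × K) :
    hyperbolicSum β c x y =
      β x.1 y.1 + (x.2.1 * y.2.2.1 + x.2.2.1 * y.2.1) + c * x.2.2.2 * y.2.2.2 := rfl

/-- `hyperbolicSum` is functorial in its first summand. -/
def hyperbolicSumCongr {V' : Type*} [AddCommGroup V'] [Module K V'] {β : BilinForm K V}
    {β' : BilinForm K V'} (e : β.IsometryEquiv β') (c : K) :
    (hyperbolicSum β c).IsometryEquiv (hyperbolicSum β' c) where
  toLinearEquiv := e.toLinearEquiv.prodCongr (.refl K _)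
  map_app' x y := by simp

end HyperbolicSum

section NullFrame

variable {K V : Type*} [Field K] [AddCommGroup V] [Module K V]

/-- A hyperbolic pair `I, J` together with a non-isotropic vector `X` orthogonal to it. -/
structure IsNullFrame (Φ : BilinForm K V) (I J X : V) : Prop where
  isSymm : Φ.IsSymm
  left_left : Φ I I = 0
  right_right : Φ J J = 0
  left_right : Φ I J = 1
  left_unit : Φ I X = 0
  right_unit : Φ J X = 0
  unit_unit : Φ X X ≠ 0

theorem exists_isNullFrame [NeZero (2 : K)] {Φ : BilinForm K V} (hΦ : Φ.IsSymm) {I X : V}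
    (hI : Φ I ≠ 0) (hII : Φ I I = 0) (hIX : Φ I X = 0) (hXX : Φ X X ≠ 0) :
    ∃ J, IsNullFrame Φ I J X := by
  obtain ⟨y, hy⟩ : ∃ y, Φ I y = 1 := LinearMap.surjective hI 1
  set z := y - (Φ X y / Φ X X) • X
  have hIz : Φ I z = 1 := by simp [z, hIX, hy]
  have hzI : Φ z I = 1 := hΦ.eq I z ▸ hIz
  have hXz : Φ X z = 0 := by simp [z, hXX]
  refine ⟨z - (Φ z z / 2) • I, hΦ, hII, ?_, by simp [hIz, hII], hIX, ?_, hXX⟩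
  · simp only [map_sub, map_smul, LinearMap.sub_apply, LinearMap.smul_apply, smul_eq_mul, hII, hIz,
      hzI]
    field
  · simp [hIX, ← hΦ.eq X z, hXz]

/-- The orthogonal complement of `I, J, X`. -/
def frameComplement (Φ : BilinForm K V) (I J X : V) : Submodule K V :=
  LinearMap.ker (Φ I) ⊓ LinearMap.ker (Φ J) ⊓ LinearMap.ker (Φ X)

lemma mem_frameComplement {Φ : BilinForm K V} {I J X v : V} :
    v ∈ frameComplement Φ I J X ↔ Φ I v = 0 ∧ Φ J v = 0 ∧ Φ X v = 0 := by
  simp [frameComplement, and_assoc]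

namespace IsNullFrame

variable {Φ : BilinForm K V} {I J X : V} (h : IsNullFrame Φ I J X)
include h

lemma right_left : Φ J I = 1 := h.isSymm.eq I J ▸ h.left_right

lemma unit_left : Φ X I = 0 := h.isSymm.eq I X ▸ h.left_unit

lemma unit_right : Φ X J = 0 := h.isSymm.eq J X ▸ h.right_unit

lemma apply_eq_zero_of_mem_frameComplement {u : V} (hu : u ∈ frameComplement Φ I J X) :
    Φ u I = 0 ∧ Φ u J = 0 ∧ Φ u X = 0 := by
  obtain ⟨hIu, hJu, hXu⟩ := mem_frameComplement.1 hu
  exact ⟨h.isSymm.eq I u ▸ hIu, h.isSymm.eq J u ▸ hJu, h.isSymm.eq X u ▸ hXu⟩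

lemma sub_mem_frameComplement (v : V) :
    v - (Φ J v • I + Φ I v • J + (Φ X v / Φ X X) • X) ∈ frameComplement Φ I J X := by
  simp [mem_frameComplement, h.left_left, h.right_right, h.left_right, h.left_unit, h.right_unit,
    h.unit_unit, h.right_left, h.unit_left, h.unit_right]

/-- The coordinates of the ambient space in a null frame. -/
def isometryEquiv :
    (hyperbolicSum (Φ.restrict (frameComplement Φ I J X)) (Φ X X)).IsometryEquiv Φ where
  toFun x := x.1 + (x.2.1 • I + x.2.2.1 • J + x.2.2.2 • X)
  map_add' x y := by
    simp only [Prod.fst_add, Prod.snd_add, Submodule.coe_add]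
    module
  map_smul' r x := by
    simp only [Prod.smul_fst, Prod.smul_snd, Submodule.coe_smul, smul_eq_mul, RingHom.id_apply]
    module
  invFun v := (⟨_, h.sub_mem_frameComplement v⟩, Φ J v, Φ I v, Φ X v / Φ X X)
  left_inv := by
    rintro ⟨⟨u, hu⟩, a, b, t⟩
    obtain ⟨hIu, hJu, hXu⟩ := mem_frameComplement.1 hu
    simp [hIu, hJu, hXu, h.left_left, h.right_right, h.left_right, h.left_unit, h.right_unit,
      h.unit_unit, h.right_left, h.unit_left, h.unit_right]
  right_inv v := by simp
  map_app' := by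
    rintro ⟨⟨u, hu⟩, a, b, t⟩ ⟨⟨u', hu'⟩, a', b', t'⟩
    obtain ⟨hIu', hJu', hXu'⟩ := mem_frameComplement.1 hu'
    obtain ⟨huI, huJ, huX⟩ := h.apply_eq_zero_of_mem_frameComplement hu
    simp only [hyperbolicSum_apply, BilinForm.restrict_apply, LinearMap.domRestrict_apply, map_add,
      map_smul, LinearMap.add_apply, LinearMap.smul_apply, smul_eq_mul, hIu', hJu', hXu', huI, huJ,
      huX, h.left_left, h.right_right, h.left_right, h.left_unit, h.right_unit, h.right_left,
      h.unit_left, h.unit_right]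
    ring

lemma isometryEquiv_left : h.isometryEquiv (0, 1, 0, 0) = I := by
  change (0 : V) + ((1 : K) • I + (0 : K) • J + (0 : K) • X) = I
  module

lemma isometryEquiv_unit : h.isometryEquiv (0, 0, 0, 1) = X := by
  change (0 : V) + ((0 : K) • I + (0 : K) • J + (1 : K) • X) = X
  module

lemma separatingLeft_restrict (hΦ : Φ.SeparatingLeft) :
    (Φ.restrict (frameComplement Φ I J X)).SeparatingLeft := by
  intro u hu
  obtain ⟨huI, huJ, huX⟩ := h.apply_eq_zero_of_mem_frameComplement u.2
  refine Subtype.ext (hΦ u fun v ↦ ?_)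
  have hproj : Φ u (v - (Φ J v • I + Φ I v • J + (Φ X v / Φ X X) • X)) = 0 :=
    hu ⟨_, h.sub_mem_frameComplement v⟩
  simpa [huI, huJ, huX] using hproj

lemma finrank_frameComplement [FiniteDimensional K V] :
    Module.finrank K (frameComplement Φ I J X) + 3 = Module.finrank K V := by
  rw [← h.isometryEquiv.toLinearEquiv.finrank_eq]
  simp [Module.finrank_prod]

end IsNullFrame

end NullFrame

section RealClassification

open QuadraticMap QuadraticForm

theorem bilinForm_equivalent_of_finrank_eq_of_sigNeg_eq {V V' : Type*} [AddCommGroup V]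
    [Module ℝ V] [FiniteDimensional ℝ V] [AddCommGroup V'] [Module ℝ V'] [FiniteDimensional ℝ V']
    {β : BilinForm ℝ V} {β' : BilinForm ℝ V'} (hβ : β.IsSymm) (hβ' : β'.IsSymm)
    (hsep : β.SeparatingLeft) (hsep' : β'.SeparatingLeft)
    (hrank : Module.finrank ℝ V = Module.finrank ℝ V')
    (hneg : sigNeg β.toQuadraticMap = sigNeg β'.toQuadraticMap) :
    β.Equivalent β' := by
  have hassoc : associated (R := ℝ) β.toQuadraticMap = β := associated_left_inverse ℝ hβ.eq
  have hassoc' : associated (R := ℝ) β'.toQuadraticMap = β' := associated_left_inverse ℝ hβ'.eq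
  obtain ⟨e⟩ := equivalent_of_finrank_eq_of_sigNeg_eq (by rwa [hassoc]) (by rwa [hassoc'])
    hrank hneg
  have hcomp : β'.toQuadraticMap.comp e.toLinearEquiv.toLinearMap = β.toQuadraticMap := by
    ext x
    exact e.map_app x
  refine ⟨{ e.toLinearEquiv with map_app' := fun x y ↦ ?_ }⟩
  calc β' (e.toLinearEquiv x) (e.toLinearEquiv y)
      = associated (R := ℝ) (β'.toQuadraticMap.comp e.toLinearEquiv.toLinearMap) x y := by
        rw [associated_comp, hassoc']
        rfl
    _ = β x y := by rw [hcomp, hassoc]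

lemma sigNeg_hyperbolicSum {V : Type*} [AddCommGroup V] [Module ℝ V] [FiniteDimensional ℝ V]
    (β : BilinForm ℝ V) {c : ℝ} (hc : 0 < c) :
    sigNeg (hyperbolicSum β c).toQuadraticMap = sigNeg β.toQuadraticMap + 1 := by
  -- `2ab = ((a + b)² - (a - b)²) / 2`
  let diag : (hyperbolicSum β c).toQuadraticMap.IsometryEquiv
      (β.toQuadraticMap.prod (weightedSumSquares ℝ ![1 / 2, -1 / 2, c])) :=
    { toFun x := (x.1, ![x.2.1 + x.2.2.1, x.2.1 - x.2.2.1, x.2.2.2])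
      invFun y := (y.1, (y.2 0 + y.2 1) / 2, (y.2 0 - y.2 1) / 2, y.2 2)
      map_add' x y := by ext i <;> [rfl; fin_cases i] <;> simp <;> ring
      map_smul' r x := by ext i <;> [rfl; fin_cases i] <;> simp <;> ring
      left_inv x := by ext <;> simp
      right_inv y := by ext i <;> [rfl; fin_cases i] <;> simp <;> ring
      map_app' x := by
        simp only [QuadraticMap.prod_apply, LinearMap.BilinMap.toQuadraticMap_apply,
          weightedSumSquares_apply, smul_eq_mul, Fin.sum_univ_three, Matrix.cons_val,
          hyperbolicSum_apply]
        ring }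
  have hneg : {i | ![1 / 2, -1 / 2, c] i < 0} = {1} := by
    ext i
    fin_cases i <;> norm_num [hc.le]
  rw [Equivalent.sigNeg_eq ⟨diag⟩, sigNeg_prod, sigNeg_weightedSumSquares, hneg,
    Set.ncard_singleton]

lemma IsNullFrame.sigNeg_restrict {V : Type*} [AddCommGroup V] [Module ℝ V]
    [FiniteDimensional ℝ V] {Φ : BilinForm ℝ V} {I J X : V} (h : IsNullFrame Φ I J X)
    (hX : 0 < Φ X X) :
    sigNeg (Φ.restrict (frameComplement Φ I J X)).toQuadraticMap + 1 =
      sigNeg Φ.toQuadraticMap := by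
  rw [← sigNeg_hyperbolicSum _ hX]
  exact Equivalent.sigNeg_eq
    ⟨{ h.isometryEquiv with map_app' := fun x ↦ h.isometryEquiv.map_app x x }⟩

theorem exists_isometryEquiv_formSigBilin {k m : ℕ} {I X : Fin (m + 3) → ℝ} (hI : I ≠ 0)
    (hII : formSigBilin (k + 1) (m + 3) I I = 0) (hXX : 0 < formSigBilin (k + 1) (m + 3) X X)
    (hIX : formSigBilin (k + 1) (m + 3) I X = 0) :
    ∃ P : (hyperbolicSum (formSigBilin k m) (formSigBilin (k + 1) (m + 3) X X)).IsometryEquiv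
      (formSigBilin (k + 1) (m + 3)), P (0, 1, 0, 0) = I ∧ P (0, 0, 0, 1) = X := by
  set Φ := formSigBilin (k + 1) (m + 3)
  have hΦ : Φ.SeparatingLeft := formSigBilin_separatingLeft _ _
  have hΦI : Φ I ≠ 0 := fun h ↦ hI <| hΦ I fun y ↦ by rw [h, LinearMap.zero_apply]
  obtain ⟨J, frame⟩ := exists_isNullFrame (formSigBilin_isSymm _ _) hΦI hII hIX hXX.ne'
  set β := Φ.restrict (frameComplement Φ I J X)
  have hrank : Module.finrank ℝ (frameComplement Φ I J X) = m := by
    simpa using frame.finrank_frameComplement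
  have hneg : sigNeg β.toQuadraticMap + 1 = min (m + 3) (k + 1) :=
    (frame.sigNeg_restrict hXX).trans (sigNeg_formSigBilin _ _)
  have hle : sigNeg β.toQuadraticMap ≤ m := by
    rw [← sigPos_neg]
    exact (sigPos_le_finrank _).trans_eq hrank
  obtain ⟨e⟩ := bilinForm_equivalent_of_finrank_eq_of_sigNeg_eq (formSigBilin_isSymm k m)
    (β' := β) ⟨fun x y ↦ frame.isSymm.eq x y⟩ (formSigBilin_separatingLeft k m)
    (frame.separatingLeft_restrict hΦ) (by simp [hrank])
    (by rw [sigNeg_formSigBilin]; omega)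
  refine ⟨(hyperbolicSumCongr e _).trans frame.isometryEquiv, ?_, ?_⟩
  · change frame.isometryEquiv (e 0, 1, 0, 0) = I
    rw [map_zero, frame.isometryEquiv_left]
  · change frame.isometryEquiv (e 0, 0, 0, 1) = X
    rw [map_zero, frame.isometryEquiv_unit]

end RealClassification

section NullRotation

variable {K V : Type*} [Field K] [AddCommGroup V] [Module K V]

/-- The linear map of the model space of `hyperbolicSum β c` which is determined, when `f` is an
isometry of `β`, by acting as `f` on `V` modulo the null vector `(0, 1, 0, 0)`, sending the opposite
null vector `(0, 0, 1, 0)` to a null vector with `V`-component `w`, and fixing `(0, 1, 0, 0)` and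
`(0, 0, 0, 1)`. -/
def nullRotation (β : BilinForm K V) (w : V) (f : Module.End K V) :
    Module.End K (V × K × K × K) where
  toFun x := (f x.1 + x.2.2.1 • w, x.2.1 - β w (f x.1) - x.2.2.1 * (β w w / 2), x.2.2.1, x.2.2.2)
  map_add' x y := by
    ext <;> simp only [Prod.fst_add, Prod.snd_add, map_add]
    · module
    · ring
  map_smul' r x := by
    ext <;> simp only [Prod.smul_fst, Prod.smul_snd, map_smul, smul_eq_mul, RingHom.id_apply]
    · module
    · ring

variable {β : BilinForm K V}

lemma nullRotation_apply (w : V) (f : Module.End K V) (u : V) (a b t : K) :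
    nullRotation β w f (u, a, b, t) = (f u + b • w, a - β w (f u) - b * (β w w / 2), b, t) := rfl

@[simp]
lemma nullRotation_left (w : V) (f : Module.End K V) :
    nullRotation β w f (0, 1, 0, 0) = (0, 1, 0, 0) := by
  simp [nullRotation_apply]

@[simp]
lemma nullRotation_unit (w : V) (f : Module.End K V) :
    nullRotation β w f (0, 0, 0, 1) = (0, 0, 0, 1) := by
  simp [nullRotation_apply]

variable (β) in
@[simp]
lemma nullRotation_zero_one : nullRotation β 0 1 = 1 := by
  refine LinearMap.ext fun ⟨u, a, b, t⟩ ↦ ?_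
  simp [nullRotation_apply]

lemma nullRotation_inj {w w' : V} {f f' : Module.End K V} :
    nullRotation β w f = nullRotation β w' f' ↔ w = w' ∧ f = f' := by
  refine ⟨fun h ↦ ⟨?_, LinearMap.ext fun u ↦ ?_⟩, by rintro ⟨rfl, rfl⟩; rfl⟩
  · simpa [nullRotation_apply] using congrArg Prod.fst (LinearMap.congr_fun h (0, 0, 1, 0))
  · simpa [nullRotation_apply] using congrArg Prod.fst (LinearMap.congr_fun h (u, 0, 0, 0))

lemma nullRotation_mul [NeZero (2 : K)] (hβ : β.IsSymm) (w w' : V) {f : Module.End K V}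
    (hf : ∀ u v, β (f u) (f v) = β u v) (f' : Module.End K V) :
    nullRotation β w f * nullRotation β w' f' = nullRotation β (w + f w') (f * f') := by
  refine LinearMap.ext fun ⟨u, a, b, t⟩ ↦ ?_
  have hww' : β (f w') w = β w (f w') := hβ.eq (f w') w
  ext
  · simp only [Module.End.mul_apply, nullRotation_apply, map_add, map_smul]
    module
  · simp only [Module.End.mul_apply, nullRotation_apply, map_add, map_smul, LinearMap.add_apply,
      smul_eq_mul, hf, hww']
    field
  · rfl
  · rfl

lemma hyperbolicSum_nullRotation [NeZero (2 : K)] (hβ : β.IsSymm) (c : K) (w : V)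
    {f : Module.End K V} (hf : ∀ u v, β (f u) (f v) = β u v) (x y : V × K × K × K) :
    hyperbolicSum β c (nullRotation β w f x) (nullRotation β w f y) = hyperbolicSum β c x y := by
  obtain ⟨u, a, b, t⟩ := x
  obtain ⟨u', a', b', t'⟩ := y
  have huw : β (f u) w = β w (f u) := hβ.eq (f u) w
  simp only [nullRotation_apply, hyperbolicSum_apply, map_add, map_smul, LinearMap.add_apply,
    LinearMap.smul_apply, smul_eq_mul, hf, huw]
  field

theorem exists_eq_nullRotation [NeZero (2 : K)] {c : K} (hc : c ≠ 0)
    {A : Module.End K (V × K × K × K)}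
    (hA : ∀ x y, hyperbolicSum β c (A x) (A y) = hyperbolicSum β c x y)
    (hleft : A (0, 1, 0, 0) = (0, 1, 0, 0)) (hunit : A (0, 0, 0, 1) = (0, 0, 0, 1)) :
    ∃ w f, (∀ u v, β (f u) (f v) = β u v) ∧ A = nullRotation β w f := by
  have hb (x) : (A x).2.2.1 = x.2.2.1 := by simpa [hleft] using hA x (0, 1, 0, 0)
  have ht (x) : (A x).2.2.2 = x.2.2.2 := by simpa [hunit, hc] using hA x (0, 0, 0, 1)
  let w : V := (A (0, 0, 1, 0)).1
  let f : Module.End K V := .fst K V _ ∘ₗ A ∘ₗ .inl K V _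
  have hfst (u : V) : (A (u, 0, 0, 0)).1 = f u := rfl
  have hf (u v : V) : β (f u) (f v) = β u v := by
    simpa [hb, ht, hfst] using hA (u, 0, 0, 0) (v, 0, 0, 0)
  have hAright : A (0, 0, 1, 0) = (w, -(β w w / 2), 1, 0) := by
    have hnull : β w w + ((A (0, 0, 1, 0)).2.1 + (A (0, 0, 1, 0)).2.1) = 0 := by
      simpa [hb, ht] using hA (0, 0, 1, 0) (0, 0, 1, 0)
    ext
    · rfl
    · change (A (0, 0, 1, 0)).2.1 = -(β w w / 2)
      rw [add_eq_zero_iff_neg_eq, ← mul_two] at hnull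
      rw [← neg_div, eq_div_iff two_ne_zero]
      exact hnull.symm
    · exact hb _
    · exact ht _
  have hAinl (u : V) : A (u, 0, 0, 0) = (f u, -β w (f u), 0, 0) := by
    have horth : β w (f u) + (A (u, 0, 0, 0)).2.1 = 0 := by
      simpa [hb, ht, hfst] using hA (0, 0, 1, 0) (u, 0, 0, 0)
    ext
    · rfl
    · exact (neg_eq_of_add_eq_zero_right horth).symm
    · exact hb _
    · exact ht _
  refine ⟨w, f, hf, LinearMap.ext fun ⟨u, a, b, t⟩ ↦ ?_⟩
  have hsplit : (u, a, b, t) = (u, 0, 0, 0) + a • (0, 1, 0, 0) + b • (0, 0, 1, 0) +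
    t • ((0, 0, 0, 1) : V × K × K × K) := by simp
  rw [hsplit, map_add, map_add, map_add, map_smul, map_smul, map_smul, hAinl, hleft, hAright, hunit,
    ← hsplit, nullRotation_apply]
  simp [sub_eq_add_neg, add_comm]

lemma det_nullRotation_one [FiniteDimensional K V] (w : V) :
    LinearMap.det (nullRotation β w 1) = 1 := by
  let right : Module.Dual K (V × K × K × K) := .fst K K K ∘ₗ .snd K K (K × K) ∘ₗ .snd K V _
  have hfactor : nullRotation β w 1 =
      LinearMap.transvection right (w, -(β w w / 2), 0, 0) *
        LinearMap.transvection (-(β w ∘ₗ .fst K V _)) (0, 1, 0, 0) := by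
    refine LinearMap.ext fun ⟨u, a, b, t⟩ ↦ ?_
    simp [nullRotation_apply, LinearMap.transvection.apply, right, sub_eq_add_neg]
  rw [hfactor, map_mul, LinearMap.transvection.det, LinearMap.transvection.det]
  simp [right]

lemma det_nullRotation [FiniteDimensional K V] (w : V) (f : Module.End K V) :
    LinearMap.det (nullRotation β w f) = LinearMap.det f := by
  have hfactor : nullRotation β w f = nullRotation β w 1 * f.prodMap 1 := by
    refine LinearMap.ext fun ⟨u, a, b, t⟩ ↦ ?_
    simp [nullRotation_apply]
  rw [hfactor, map_mul, det_nullRotation_one, LinearMap.det_prodMap, map_one, one_mul, mul_one]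

end NullRotation

section StabilizerTransport

variable {k m : ℕ}

lemma mem_specialIsometry_iff {A : (Matrix (Fin m) (Fin m) ℝ)ˣ} :
    A ∈ specialIsometry k m ↔ LinearMap.det (Matrix.toLin' A.1) = 1 ∧
      ∀ x y, formSigBilin k m (Matrix.toLin' A.1 x) (Matrix.toLin' A.1 y) =
        formSigBilin k m x y := by
  simp only [LinearMap.det_toLin', Matrix.toLin'_apply, formSigBilin_apply]
  rfl

/-- The representation of `ℝ^m ⋊ SO(k, m - k)` by null rotations. -/
noncomputable def nullRotationHom (k m : ℕ) :
    SemidirectProduct (Multiplicative (Fin m → ℝ)) (specialIsometry k m)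
      (subgroupMulVecHom (specialIsometry k m)) →*
      Module.End ℝ ((Fin m → ℝ) × ℝ × ℝ × ℝ) where
  toFun g := nullRotation (formSigBilin k m) g.left.toAdd (Matrix.toLin' g.right.1.1)
  map_one' := by
    simp only [SemidirectProduct.one_left, SemidirectProduct.one_right, toAdd_one,
      OneMemClass.coe_one, Units.val_one, Matrix.toLin'_one]
    exact nullRotation_zero_one _
  map_mul' g h := by
    rw [nullRotation_mul (formSigBilin_isSymm k m) _ _ (mem_specialIsometry_iff.1 g.right.2).2]
    simp only [SemidirectProduct.mul_left, SemidirectProduct.mul_right, toAdd_mul,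
      Subgroup.coe_mul, Units.val_mul, Matrix.toLin'_mul]
    rfl

lemma nullRotationHom_injective : Function.Injective (nullRotationHom k m) := by
  intro g h hgh
  obtain ⟨hleft, hright⟩ := nullRotation_inj.1 hgh
  exact SemidirectProduct.ext (Multiplicative.toAdd.injective hleft)
    (Subtype.ext (Units.ext (Matrix.toLin'.injective hright)))

lemma mem_range_nullRotationHom_iff {c : ℝ} (hc : c ≠ 0)
    {A : Module.End ℝ ((Fin m → ℝ) × ℝ × ℝ × ℝ)} :
    A ∈ Set.range (nullRotationHom k m) ↔ LinearMap.det A = 1 ∧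
      (∀ x y, hyperbolicSum (formSigBilin k m) c (A x) (A y) =
        hyperbolicSum (formSigBilin k m) c x y) ∧
      A (0, 1, 0, 0) = (0, 1, 0, 0) ∧ A (0, 0, 0, 1) = (0, 0, 0, 1) := by
  constructor
  · rintro ⟨g, rfl⟩
    obtain ⟨hdet, hform⟩ := mem_specialIsometry_iff.1 g.right.2
    exact ⟨(det_nullRotation _ _).trans hdet,
      hyperbolicSum_nullRotation (formSigBilin_isSymm k m) c _ hform,
      nullRotation_left _ _, nullRotation_unit _ _⟩
  · rintro ⟨hdet, hA, hleft, hunit⟩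
    obtain ⟨w, f, hf, rfl⟩ := exists_eq_nullRotation hc hA hleft hunit
    obtain ⟨B, rfl⟩ := Matrix.toLin'.surjective f
    rw [det_nullRotation] at hdet
    have hB : IsUnit B.det := by simp [← LinearMap.det_toLin', hdet]
    exact ⟨⟨.ofAdd w, B.nonsingInvUnit hB, mem_specialIsometry_iff.2 ⟨hdet, hf⟩⟩, rfl⟩

/-- The matrices of the null rotations with respect to an isomorphism of the model space of
`hyperbolicSum` with `ℝ^n`. -/
noncomputable def nullRotationMatrixHom (k : ℕ) {n : ℕ}
    (P : ((Fin m → ℝ) × ℝ × ℝ × ℝ) ≃ₗ[ℝ] (Fin n → ℝ)) :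
    SemidirectProduct (Multiplicative (Fin m → ℝ)) (specialIsometry k m)
      (subgroupMulVecHom (specialIsometry k m)) →* (Matrix (Fin n) (Fin n) ℝ)ˣ :=
  (((LinearMap.toMatrixAlgEquiv' (R := ℝ) (n := Fin n)).toMulEquiv.toMonoidHom.comp
    P.conjRingEquiv.toMulEquiv.toMonoidHom).comp (nullRotationHom k m)).toHomUnits

lemma nullRotationMatrixHom_eq_iff {n : ℕ} {P : ((Fin m → ℝ) × ℝ × ℝ × ℝ) ≃ₗ[ℝ] (Fin n → ℝ)}
    {g : SemidirectProduct (Multiplicative (Fin m → ℝ)) (specialIsometry k m)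
      (subgroupMulVecHom (specialIsometry k m))} {A : (Matrix (Fin n) (Fin n) ℝ)ˣ} :
    nullRotationMatrixHom k P g = A ↔ nullRotationHom k m g = P.symm.conj (Matrix.toLin' A.1) := by
  rw [Units.ext_iff]
  change LinearMap.toMatrix' (P.conj (nullRotationHom k m g)) = A ↔ _
  rw [← Matrix.toLin'.injective.eq_iff, Matrix.toLin'_toMatrix',
    ← P.conj_conj_symm (Matrix.toLin' A.1), P.conj.injective.eq_iff, P.conj_conj_symm]

lemma nullRotationMatrixHom_injective {n : ℕ}
    (P : ((Fin m → ℝ) × ℝ × ℝ × ℝ) ≃ₗ[ℝ] (Fin n → ℝ)) :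
    Function.Injective (nullRotationMatrixHom k P) := fun _ _ hgh ↦
  nullRotationHom_injective <| (nullRotationMatrixHom_eq_iff.1 hgh).trans
    (nullRotationMatrixHom_eq_iff.1 rfl).symm

lemma range_nullRotationMatrixHom {c : ℝ} (hc : c ≠ 0) {k' n : ℕ}
    (P : (hyperbolicSum (formSigBilin k m) c).IsometryEquiv (formSigBilin k' n)) :
    (nullRotationMatrixHom k P.toLinearEquiv).range =
      specialIsometry k' n ⊓ vecStab n (P (0, 1, 0, 0)) ⊓ vecStab n (P (0, 0, 0, 1)) := by
  ext A
  set T := P.toLinearEquiv.symm.conj (Matrix.toLin' A.1)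
  have hPT (x) : P (T x) = Matrix.toLin' A.1 (P x) := P.toLinearEquiv.apply_symm_apply _
  have hdet : LinearMap.det T = LinearMap.det (Matrix.toLin' A.1) :=
    LinearMap.det_conj (Matrix.toLin' A.1) P.toLinearEquiv.symm
  have hform : (∀ x y, hyperbolicSum (formSigBilin k m) c (T x) (T y) =
      hyperbolicSum (formSigBilin k m) c x y) ↔
      ∀ x y, formSigBilin k' n (Matrix.toLin' A.1 x) (Matrix.toLin' A.1 y) =
        formSigBilin k' n x y := by
    simp only [← P.map_app, hPT]
    exact (P.toLinearEquiv.surjective.forall₂ (p := fun x y ↦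
      formSigBilin k' n (Matrix.toLin' A.1 x) (Matrix.toLin' A.1 y) = formSigBilin k' n x y)).symm
  have hfix (x) : T x = x ↔ A ∈ vecStab n (P x) := by
    rw [← P.toLinearEquiv.injective.eq_iff]
    exact Eq.congr_left (hPT x)
  simp_rw [MonoidHom.mem_range, nullRotationMatrixHom_eq_iff]
  refine (mem_range_nullRotationHom_iff hc).trans ?_
  rw [hdet, hform, hfix, hfix, Subgroup.mem_inf, Subgroup.mem_inf, mem_specialIsometry_iff,
    and_assoc, and_assoc]

end StabilizerTransport

theorem stabilizer_of_Spi_point_iso_general {k m : ℕ} {I X : Fin (m + 3) → ℝ} (hI : I ≠ 0)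
    (hII : formSig (k + 1) (m + 3) I I = 0) (hXX : 0 < formSig (k + 1) (m + 3) X X)
    (hIX : formSig (k + 1) (m + 3) I X = 0) :
    Nonempty (↥(specialIsometry (k + 1) (m + 3) ⊓ vecStab (m + 3) I ⊓ vecStab (m + 3) X) ≃*
      SemidirectProduct (Multiplicative (Fin m → ℝ)) (specialIsometry k m)
        (subgroupMulVecHom (specialIsometry k m))) := by
  rw [← formSigBilin_apply] at hII hXX hIX
  obtain ⟨P, rfl, hPX⟩ := exists_isometryEquiv_formSigBilin hI hII hXX hIX
  have hrange := range_nullRotationMatrixHom hXX.ne' P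
  rw [hPX] at hrange
  exact ⟨((MonoidHom.ofInjective (nullRotationMatrixHom_injective P.toLinearEquiv)).trans
    (MulEquiv.subgroupCongr hrange)).symm⟩

/-- For `n ≥ 3` and any `X` in the flat-model orbit `Spi^n = M_{1,0}`, the stabilizer of
`X` in the Poincaré subgroup `G` is isomorphic, as a group, to the semidirect product
`ℝ^{n-1} ⋊ SO(1,n-2)`, where `SO(1,n-2)` is the group of matrices of determinant one
preserving the standard Minkowski form `η' = formSig 1 (n-1)` of signature `(1,n-2)` on
`ℝ^{n-1}`, acting by matrix–vector multiplication. -/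
theorem stabilizer_of_Spi_point_iso
    (n : ℕ) (hn : 3 ≤ n) (I : Fin (n + 2) → ℝ) (hI : I ≠ 0)
    (hII : formSig 2 (n + 2) I I = 0)
    (X : Fin (n + 2) → ℝ) (hX : X ∈ Mset n I 1 0) :
    Nonempty ((↥(poincareGroup n I ⊓ vecStab (n + 2) X)) ≃*
      SemidirectProduct (Multiplicative (Fin (n - 1) → ℝ))
        (↥(specialIsometry 1 (n - 1)))
        (subgroupMulVecHom (specialIsometry 1 (n - 1)))) := by
  obtain ⟨m, rfl⟩ : ∃ m, n = m + 1 := ⟨n - 1, by omega⟩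
  exact stabilizer_of_Spi_point_iso_general hI hII (hX.1 ▸ one_pos) hX.2.1
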